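/- arXiv:1406.0157 — 2 statements merged into one kernel-verified Lean document; each statement's English description precedes it below -/
import Mathlib

section
/- Let k ≥ 1 and n ≥ 1 be integers, let W_1, …, W_n ⊆ (ZMod 2)^k be sets of nonzero vectors each of which is either empty or of size at least 2n², and let S ⊆ (ZMod 2)^k be a nonempty set of nonzero vectors. Then there exists a vector R ∈ (ZMod 2)^k that simultaneously (1/(2√n))-splits every nonempty set W_i (1 ≤ i ≤ n) and (1/8)-elevates S. -/
/-!
Second-moment method with `R` uniform. The bias `∑ s ∈ S, (-1) ^ ⟨R, s⟩` of a set `S` has second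
moment `|S|` (`sum_bias_sq`), and mean `0` if `0 ∉ S` (`sum_bias`). By Chebyshev, failure to split
`W i` is dominated by the penalty `n / |W i| ^ 2 * bias ^ 2` of mean `n / |W i| ≤ 1 / (2 * n)`, so
these penalties together have mean at most `1 / 2`. Failure to elevate `S` is dominated by a
one-sided quadratic penalty of mean at most `1 / 2` (`exists_penalty`). If every `R` failed, the
total penalty would be at least `1` everywhere with mean at most `1`. This is impossible: if some
`W i` is nonempty the total is at least `2` at `R = 0`, and otherwise its mean is at most `1 / 2`.
-/

open Finset

/-- Inner product over GF(2). -/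
def ip {k : ℕ} (R s : Fin k → ZMod 2) : ZMod 2 := ∑ i, R i * s i

/-- `R` ε-splits the finite set `S`. -/
def splits {k : ℕ} (ε : ℝ) (R : Fin k → ZMod 2) (S : Finset (Fin k → ZMod 2)) : Prop :=
  (1 / 2 - ε) * (S.card : ℝ) ≤ ((S.filter fun s => ip R s = 1).card : ℝ) ∧
  ((S.filter fun s => ip R s = 1).card : ℝ) ≤ (1 / 2 + ε) * (S.card : ℝ)

/-- `R` ε-elevates the finite set `S`. -/
def elevates {k : ℕ} (ε : ℝ) (R : Fin k → ZMod 2) (S : Finset (Fin k → ZMod 2)) : Prop :=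
  ε * (S.card : ℝ) ≤ ((S.filter fun s => ip R s = 1).card : ℝ)

/-- The sign character `(-1) ^ ⟨R, s⟩`. -/
noncomputable def chi {k : ℕ} (R s : Fin k → ZMod 2) : ℝ := if ip R s = 1 then -1 else 1

/-- The bias `∑ s ∈ S, (-1) ^ ⟨R, s⟩`: number of zeros minus number of ones of `⟨R, ·⟩` on `S`. -/
noncomputable def bias {k : ℕ} (R : Fin k → ZMod 2) (S : Finset (Fin k → ZMod 2)) : ℝ := ∑ s ∈ S, chi R s

lemma ip_add_left {k : ℕ} (R Q s : Fin k → ZMod 2) : ip (R + Q) s = ip R s + ip Q s := by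
  simp [ip, add_mul, Finset.sum_add_distrib]

lemma ip_add_right {k : ℕ} (R s t : Fin k → ZMod 2) : ip R (s + t) = ip R s + ip R t := by
  simp [ip, mul_add, Finset.sum_add_distrib]

lemma sign_add (a b : ZMod 2) :
    (if a + b = 1 then (-1 : ℝ) else 1) = (if a = 1 then -1 else 1) * (if b = 1 then -1 else 1) := by
  have h : ∀ a b : ZMod 2, a + b = 1 ↔ ¬ (a = 1 ↔ b = 1) := by decide
  by_cases ha : a = 1 <;> by_cases hb : b = 1 <;> simp only [h, ha, hb] <;> norm_num

lemma chi_add_left {k : ℕ} (R Q s : Fin k → ZMod 2) : chi (R + Q) s = chi R s * chi Q s := by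
  simp only [chi, ip_add_left, sign_add]

lemma chi_add_right {k : ℕ} (R s t : Fin k → ZMod 2) : chi R (s + t) = chi R s * chi R t := by
  simp only [chi, ip_add_right, sign_add]

/-- Orthogonality: translating `R` by a basis vector on which `s` is nonzero flips every sign. -/
lemma sum_chi {k : ℕ} {s : Fin k → ZMod 2} (hs : s ≠ 0) : ∑ R, chi R s = 0 := by
  obtain ⟨i, hi⟩ := Function.ne_iff.mp hs
  have h1 : ∀ a : ZMod 2, a ≠ 0 → a = 1 := by decide
  have hflip : chi (Pi.single i 1) s = -1 := by
    have : ip (Pi.single i 1) s = 1 := by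
      simp [ip, Pi.single_apply, h1 _ hi]
    simp [chi, this]
  have h := Equiv.sum_comp (Equiv.addRight (Pi.single i (1 : ZMod 2))) (fun R => chi R s)
  simp only [Equiv.coe_addRight, chi_add_left, hflip, ← Finset.sum_mul] at h
  linarith

lemma sum_bias {k : ℕ} {S : Finset (Fin k → ZMod 2)} (hS0 : ∀ s ∈ S, s ≠ 0) :
    ∑ R, bias R S = 0 := by
  simp only [bias]
  rw [Finset.sum_comm]
  exact Finset.sum_eq_zero fun s hs => sum_chi (hS0 s hs)

/-- Pairwise independence of the signs: the second moment of the bias is `|S|`. -/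
lemma sum_bias_sq {k : ℕ} (S : Finset (Fin k → ZMod 2)) :
    ∑ R, bias R S ^ 2 = (Fintype.card (Fin k → ZMod 2) : ℝ) * S.card := by
  have hst : ∀ s t : Fin k → ZMod 2, ∑ R, chi R s * chi R t
      = if s = t then (Fintype.card (Fin k → ZMod 2) : ℝ) else 0 := by
    intro s t
    split_ifs with h
    · subst h
      have : ∀ R, chi R s * chi R s = 1 := by
        intro R
        unfold chi
        split_ifs <;> norm_num
      simp [this]
    · simp only [← chi_add_right]
      refine sum_chi fun h0 => h ?_
      funext i
      have h2 : ∀ a b : ZMod 2, a + b = 0 → a = b := by decide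
      exact h2 _ _ (congrFun h0 i)
  simp only [bias, sq, Finset.sum_mul_sum]
  rw [Finset.sum_comm]
  have : ∀ s ∈ S, ∑ R, ∑ t ∈ S, chi R s * chi R t = (Fintype.card (Fin k → ZMod 2) : ℝ) := by
    intro s hs
    rw [Finset.sum_comm]
    simp [hst, hs]
  rw [Finset.sum_congr rfl this]
  simp [mul_comm]

lemma bias_eq {k : ℕ} (R : Fin k → ZMod 2) (S : Finset (Fin k → ZMod 2)) :
    bias R S = S.card - 2 * ((S.filter fun s => ip R s = 1).card : ℝ) := by
  have : ∀ s, chi R s = 1 - 2 * (if ip R s = 1 then (1 : ℝ) else 0) := by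
    intro s
    unfold chi
    split_ifs <;> norm_num
  simp only [bias, this, Finset.sum_sub_distrib, ← Finset.mul_sum, Finset.sum_boole]
  simp

lemma bias_zero {k : ℕ} (S : Finset (Fin k → ZMod 2)) : bias 0 S = S.card := by
  simp [bias, chi, ip]

/-- Chebyshev's penalty for a set that is not split is at least `1`. -/
lemma one_le_of_not_splits {k n : ℕ} (hn : 1 ≤ n) (R : Fin k → ZMod 2)
    (S : Finset (Fin k → ZMod 2)) (hS : S.Nonempty)
    (h : ¬ splits (1 / (2 * Real.sqrt n)) R S) :
    1 ≤ (n : ℝ) / (S.card : ℝ) ^ 2 * bias R S ^ 2 := by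
  have hm : (0 : ℝ) < S.card := by exact_mod_cast hS.card_pos
  have hn0 : (0 : ℝ) < n := by exact_mod_cast hn
  by_contra! hlt
  apply h
  have hr : 0 < Real.sqrt n := Real.sqrt_pos.mpr hn0
  have hsq : (Real.sqrt n * bias R S) ^ 2 < (S.card : ℝ) ^ 2 := by
    rw [mul_pow, Real.sq_sqrt hn0.le]
    rw [div_mul_eq_mul_div, div_lt_one (by positivity)] at hlt
    exact hlt
  obtain ⟨h1, h2⟩ := abs_lt.mp (abs_lt_of_sq_lt_sq hsq hm.le)
  have hε : 1 / (2 * Real.sqrt n) * (S.card : ℝ) = (S.card : ℝ) / Real.sqrt n / 2 := by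
    field_simp
  have h3 : bias R S < S.card / Real.sqrt n := by
    rw [lt_div_iff₀ hr]; linarith
  have h4 : -(S.card / Real.sqrt n) < bias R S := by
    rw [neg_lt, lt_div_iff₀ hr]; linarith
  rw [bias_eq] at h3 h4
  constructor
  · rw [sub_mul, hε]; linarith
  · rw [add_mul, hε]; linarith

/-- A quadratic penalty `a * (bias / |S| + 1) ^ 2` of mean at most `1 / 2` detecting failure of
elevation. For `|S| = 1` the bias is `± |S|`, so `a = 1 / 4` suffices; for `|S| ≥ 2` a failure
means `bias / |S| > 3 / 4`, so `a = 16 / 49` suffices, and the mean is at most `24 / 49`. -/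
lemma exists_penalty {k : ℕ} (S : Finset (Fin k → ZMod 2)) (hS : S.Nonempty)
    (hS0 : ∀ s ∈ S, s ≠ 0) :
    ∃ g : (Fin k → ZMod 2) → ℝ, (∀ R, 0 ≤ g R) ∧ (∀ R, ¬ elevates (1 / 8) R S → 1 ≤ g R) ∧
      1 ≤ g 0 ∧ ∑ R, g R ≤ (Fintype.card (Fin k → ZMod 2) : ℝ) / 2 := by
  have hmN := hS.card_pos
  have hm : (0 : ℝ) < S.card := by exact_mod_cast hmN
  have hN : (0 : ℝ) < Fintype.card (Fin k → ZMod 2) := by exact_mod_cast Fintype.card_pos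
  have hsum : ∀ a : ℝ, ∑ R, a * (bias R S / S.card + 1) ^ 2
      = a * (Fintype.card (Fin k → ZMod 2) : ℝ) * (1 / S.card + 1) := by
    intro a
    have : ∀ R, a * (bias R S / S.card + 1) ^ 2
        = a / (S.card : ℝ) ^ 2 * bias R S ^ 2 + 2 * a / S.card * bias R S + a := by
      intro R
      field_simp
      ring
    simp only [this, Finset.sum_add_distrib, ← Finset.mul_sum, sum_bias_sq, sum_bias hS0]
    simp only [sum_const, card_univ, nsmul_eq_mul]
    field_simp
    ring
  have hdiv : ∀ R, bias R S / S.card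
      = 1 - 2 * (((S.filter fun s => ip R s = 1).card : ℝ) / S.card) := by
    intro R
    rw [bias_eq]
    field_simp
  have hzero : bias (0 : Fin k → ZMod 2) S / S.card = 1 := by
    rw [bias_zero, div_self hm.ne']
  by_cases h1 : S.card = 1
  · refine ⟨fun R => 1 / 4 * (bias R S / S.card + 1) ^ 2, fun R => by positivity,
      fun R hR => ?_, ?_, ?_⟩
    · have hc : (S.filter fun s => ip R s = 1).card = 0 := by
        by_contra hc
        apply hR
        have : (1 : ℝ) ≤ ((S.filter fun s => ip R s = 1).card : ℝ) := by
          exact_mod_cast Nat.one_le_iff_ne_zero.mpr hc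
        unfold elevates
        rw [h1]
        push_cast
        linarith
      simp only [hdiv, hc]
      norm_num
    · simp only [hzero]
      norm_num
    · rw [hsum, h1]
      push_cast
      linarith
  · have h2 : (2 : ℝ) ≤ S.card := by
      exact_mod_cast (show 2 ≤ S.card by omega)
    refine ⟨fun R => 16 / 49 * (bias R S / S.card + 1) ^ 2, fun R => by positivity,
      fun R hR => ?_, ?_, ?_⟩
    · unfold elevates at hR
      rw [not_le] at hR
      have hlt : ((S.filter fun s => ip R s = 1).card : ℝ) / S.card < 1 / 8 := by
        rwa [div_lt_iff₀ hm]
      have hb : 7 / 4 ≤ bias R S / S.card + 1 := by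
        rw [hdiv]; linarith
      show 1 ≤ 16 / 49 * (bias R S / S.card + 1) ^ 2
      nlinarith
    · simp only [hzero]
      norm_num
    · rw [hsum]
      have : 1 / (S.card : ℝ) ≤ 1 / 2 := one_div_le_one_div_of_le (by norm_num) h2
      nlinarith

theorem stmt2 (k n : ℕ) (hk : 1 ≤ k) (hn : 1 ≤ n)
    (W : Fin n → Finset (Fin k → ZMod 2))
    (hW0 : ∀ i, ∀ s ∈ W i, s ≠ 0)
    (hWcard : ∀ i, W i = ∅ ∨ 2 * n ^ 2 ≤ (W i).card)
    (S : Finset (Fin k → ZMod 2)) (hS : S.Nonempty) (hS0 : ∀ s ∈ S, s ≠ 0) :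
    ∃ R : Fin k → ZMod 2,
      (∀ i, (W i).Nonempty → splits (1 / (2 * Real.sqrt n)) R (W i)) ∧
      elevates (1 / 8) R S := by
  obtain ⟨g, hg0, hg1, hgz, hgsum⟩ := exists_penalty S hS hS0
  have hn1 : (1 : ℝ) ≤ n := by exact_mod_cast hn
  have hN : (0 : ℝ) < Fintype.card (Fin k → ZMod 2) := by exact_mod_cast Fintype.card_pos
  -- For empty `W i` the penalty is `0`, because the bias vanishes.
  set p : Fin n → (Fin k → ZMod 2) → ℝ :=
    fun i R => (n : ℝ) / ((W i).card : ℝ) ^ 2 * bias R (W i) ^ 2 with hp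
  have hp0 : ∀ i R, 0 ≤ p i R := fun i R => by simp only [hp]; positivity
  have hpsum : ∀ i, ∑ R, p i R ≤ (Fintype.card (Fin k → ZMod 2) : ℝ) / (2 * n) := by
    intro i
    simp only [hp, ← Finset.mul_sum, sum_bias_sq]
    rcases hWcard i with h | h
    · simp only [h, card_empty, Nat.cast_zero, mul_zero]
      positivity
    · have h' : 2 * (n : ℝ) ^ 2 ≤ (W i).card := by exact_mod_cast h
      have hm : (0 : ℝ) < (W i).card := by nlinarith
      rw [le_div_iff₀ (by positivity), div_mul_eq_mul_div, div_mul_eq_mul_div,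
        div_le_iff₀ (by positivity)]
      calc (n : ℝ) * (Fintype.card (Fin k → ZMod 2) * (W i).card) * (2 * n)
          = Fintype.card (Fin k → ZMod 2) * (W i).card * (2 * n ^ 2) := by ring
        _ ≤ Fintype.card (Fin k → ZMod 2) * (W i).card * (W i).card := by gcongr
        _ = _ := by ring
  by_contra! hbad
  have htot : ∀ R, 1 ≤ ∑ i, p i R + g R := by
    intro R
    have hs0 : 0 ≤ ∑ i, p i R := Finset.sum_nonneg fun i _ => hp0 i R
    by_cases h : ∀ i, (W i).Nonempty → splits (1 / (2 * Real.sqrt n)) R (W i)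
    · linarith [hg1 R (hbad R h)]
    · push Not at h
      obtain ⟨i, hi, hns⟩ := h
      have h1 : 1 ≤ p i R := one_le_of_not_splits hn R (W i) hi hns
      have h2 : p i R ≤ ∑ i, p i R :=
        Finset.single_le_sum (f := fun i => p i R) (fun i _ => hp0 i R) (mem_univ i)
      linarith [hg0 R]
  have hsplit : ∑ R, (∑ i, p i R + g R) = ∑ i, ∑ R, p i R + ∑ R, g R := by
    rw [Finset.sum_add_distrib, Finset.sum_comm]
  by_cases hall : ∀ i, W i = ∅
  · have h0 : ∀ R, 1 ≤ g R := by
      intro R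
      have := htot R
      simpa [hp, hall] using this
    have : ∑ _R : Fin k → ZMod 2, (1 : ℝ) ≤ ∑ R, g R := Finset.sum_le_sum fun R _ => h0 R
    simp only [sum_const, card_univ, nsmul_eq_mul, mul_one] at this
    linarith
  · push Not at hall
    obtain ⟨i, hi⟩ := hall
    -- The total penalty has mean at most `1`; at `R = 0` it is at least `2`.
    have hz : 1 < ∑ i, p i 0 + g 0 := by
      have hm : (0 : ℝ) < (W i).card := by exact_mod_cast (card_pos.mpr hi)
      have h1 : 1 ≤ p i 0 := by
        simp only [hp, bias_zero]
        rwa [div_mul_cancel₀ _ (by positivity)]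
      have h2 : p i 0 ≤ ∑ i, p i 0 :=
        Finset.single_le_sum (f := fun i => p i 0) (fun i _ => hp0 i 0) (mem_univ i)
      linarith
    have hlt : ∑ _R : Fin k → ZMod 2, (1 : ℝ) < ∑ R, (∑ i, p i R + g R) :=
      Finset.sum_lt_sum (fun R _ => htot R) ⟨0, mem_univ _, hz⟩
    rw [hsplit] at hlt
    simp only [sum_const, card_univ, nsmul_eq_mul, mul_one] at hlt
    have hle : ∑ i, ∑ R, p i R ≤ (Fintype.card (Fin k → ZMod 2) : ℝ) / 2 := by
      calc ∑ i, ∑ R, p i R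
          ≤ ∑ _i : Fin n, (Fintype.card (Fin k → ZMod 2) : ℝ) / (2 * n) :=
            Finset.sum_le_sum fun i _ => hpsum i
        _ = _ := by
          simp only [sum_const, card_univ, nsmul_eq_mul, Fintype.card_fin]
          field_simp
    linarith
end

section
/- (Error bound of Theorem 1, capacity-achieving rateless codes.) Let β : ℕ → ℝ be any function with β(k) ≥ 1 for all k and β(k) → ∞ as k → ∞. Then there exist, for every k ≥ 1, an encoding function E_k : (ZMod 2)^k → (ℕ → ZMod 2) and, for every n ≥ 1, a decoding function D_{k,n} : (ZMod 2)^n → (ZMod 2)^k, such that for every p ∈ (0, 1/2) and every δ ∈ (0, 1 − H(p)) there exist a constant c > 0 and an integer k₀ with the following property: for every k ≥ k₀, every integer n ≥ k/(1 − H(p) − δ), and every message m ∈ (ZMod 2)^k, the BSC(p)-probability of the set {η ∈ (ZMod 2)^n : D_{k,n}((E_k m)|_n + η) ≠ m} is at most 2^{−c·k/β(k)}, where (E_k m)|_n ∈ (ZMod 2)^n denotes the first n bits of E_k m. -/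
/-!
The codes are linear: `E_k` is given by a generator matrix `G` with `N = k ^ 2` columns, and the
decoder performs minimum-distance decoding on the first `min n N` received bits. It does not depend
on the noise parameter.

For each length `n ≤ N` and each weight `t`, let `X(n,t)` be the number of pairs `(η, a)` with
`wt η = t`, `a ≠ 0` and `wt (aG + η) ≤ t` (`badPairs`); every decoding error on a noise vector of
weight `t` produces such a pair. For uniform `G` the word `aG` is uniform, so the mean of `X(n,t)` is
at most `S(n,t) V(n,t) 2^(k-n)`, with `S` and `V` the sizes of the Hamming sphere and ball
(`sum_badPairs_le`). By averaging, a single `G` exceeds none of these means by more than the factor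
`(N+1)^2` (`exists_good_code`). This property of `G` mentions neither `p` nor `δ`.

For such a `G` and given `p`, `δ`, the noise has weight more than `(p+ε)n` with probability at most
`exp(-ε²n/4)` (`tail_le`). For `t ≤ (p+ε)n` the ball satisfies `V(n,t) ≤ 2^(n(H(p)+δ/2))` when `ε`
is small (`ball_le`), which gives error at most `(N+1)^2 2^(-nδ/2)` from the remaining noise
(`error_le`). Both terms are exponentially small in `k`, uniformly in `n`. Lengths `n > N` reduce to
`n = N` because the error event depends on the first `N` bits only (`bscProb_truncate`). The final
bound `2^(-ck)` is stronger than `2^(-ck/β(k))`.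
-/

open Finset

/-- Hamming weight of a binary vector. -/
def wt {n : ℕ} (x : Fin n → ZMod 2) : ℕ := (Finset.univ.filter fun j => x j = 1).card

/-- Probability, over a vector of n i.i.d. Bernoulli(p) bits, of a set of binary vectors. -/
noncomputable def bscProb {n : ℕ} (p : ℝ) (E : Finset (Fin n → ZMod 2)) : ℝ :=
  ∑ η ∈ E, p ^ wt η * (1 - p) ^ (n - wt η)

/-- Binary entropy function (base-2 logarithms). -/
noncomputable def binH (p : ℝ) : ℝ := -p * Real.logb 2 p - (1 - p) * Real.logb 2 (1 - p)

/-! ### The product measure -/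

/-- BSC(p)-probability of a single noise vector. -/
noncomputable def bscWeight {n : ℕ} (p : ℝ) (η : Fin n → ZMod 2) : ℝ :=
  p ^ wt η * (1 - p) ^ (n - wt η)

lemma wt_le {n : ℕ} (η : Fin n → ZMod 2) : wt η ≤ n := by
  unfold wt
  exact (Finset.card_le_univ _).trans (by simp)

lemma bscWeight_nonneg {n : ℕ} {p : ℝ} (h0 : 0 < p) (h1 : p < 1) (η : Fin n → ZMod 2) :
    0 ≤ bscWeight p η := by
  have : 0 < 1 - p := by linarith
  unfold bscWeight
  positivity

lemma prod_ite_eq_pow {n : ℕ} (x y : ℝ) (η : Fin n → ZMod 2) :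
    ∏ j, (if η j = 1 then x else y) = x ^ wt η * y ^ (n - wt η) := by
  rw [Finset.prod_ite, Finset.prod_const, Finset.prod_const]
  have h := Finset.card_filter_add_card_filter_not (s := (Finset.univ : Finset (Fin n)))
    (fun j => η j = 1)
  rw [Finset.card_univ, Fintype.card_fin] at h
  unfold wt
  congr 2
  omega

lemma bscWeight_eq_prod {n : ℕ} (p : ℝ) (η : Fin n → ZMod 2) :
    bscWeight p η = ∏ j, (if η j = 1 then p else 1 - p) :=
  (prod_ite_eq_pow _ _ _).symm

lemma sum_pow_wt (n : ℕ) (x y : ℝ) :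
    ∑ η : Fin n → ZMod 2, x ^ wt η * y ^ (n - wt η) = (x + y) ^ n := by
  simp_rw [← prod_ite_eq_pow]
  rw [← Fintype.prod_sum (fun (_ : Fin n) (b : ZMod 2) => if b = 1 then x else y)]
  have : ∑ b : ZMod 2, (if b = 1 then x else y) = x + y := by
    rw [show (Finset.univ : Finset (ZMod 2)) = {0, 1} from rfl]
    simp [add_comm]
  simp [this]

lemma sum_bscWeight (n : ℕ) (p : ℝ) : ∑ η : Fin n → ZMod 2, bscWeight p η = 1 := by
  unfold bscWeight
  rw [sum_pow_wt]
  simp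

/-- The probability of an event that only depends on the first `n` bits out of `n + r`. -/
lemma bscProb_truncate (n r : ℕ) (p : ℝ) (P : (Fin n → ZMod 2) → Prop) [DecidablePred P] :
    bscProb p (Finset.univ.filter fun η : Fin (n + r) → ZMod 2 =>
      P (fun j => η (Fin.castAdd r j))) = bscProb p (Finset.univ.filter P) := by
  have key : ∀ (l : ℕ) (s : Finset (Fin l → ZMod 2)), bscProb p s = ∑ η ∈ s, bscWeight p η :=
    fun _ _ => rfl
  rw [key, key, Finset.sum_filter, Finset.sum_filter,
    ← (Fin.appendEquiv n r).sum_comp, Fintype.sum_prod_type]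
  refine Finset.sum_congr rfl fun a _ => ?_
  have h : ∀ b : Fin r → ZMod 2,
      (fun j => (Fin.appendEquiv n r (a, b) : Fin (n + r) → ZMod 2) (Fin.castAdd r j)) = a := by
    intro b; ext j; simp [Fin.appendEquiv]
  have h2 : ∀ b : Fin r → ZMod 2, bscWeight p (Fin.appendEquiv n r (a, b) : Fin (n + r) → ZMod 2)
      = bscWeight p a * bscWeight p b := by
    intro b
    simp only [bscWeight_eq_prod]
    rw [Fin.prod_univ_add]
    simp [Fin.appendEquiv]
  simp only [h, h2]
  split_ifs
  · rw [← Finset.mul_sum, sum_bscWeight, mul_one]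
  · simp

/-- Chernoff bound for the weight of the noise, with explicit tilt `exp (ε / 2)`. -/
lemma tail_le (n : ℕ) {p ε : ℝ} (h0 : 0 < p) (h1 : p < 1) (e0 : 0 < ε) (e1 : ε ≤ 1) :
    ∑ η : Fin n → ZMod 2 with ¬ ((wt η : ℝ) ≤ (p + ε) * n), bscWeight p η
      ≤ Real.exp (-(ε ^ 2 / 4) * n) := by
  set l : ℝ := ε / 2 with hl
  have q0 : 0 < 1 - p := by linarith
  have hE := Real.exp_pos l
  have hexp : Real.exp l ≤ 1 + l + l ^ 2 := by
    have := Real.abs_exp_sub_one_sub_id_le (x := l) (by rw [abs_le]; constructor <;> linarith)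
    linarith [(abs_le.1 this).2]
  have hbase : p * Real.exp l + (1 - p) ≤ Real.exp (p * (l + l ^ 2)) := by
    have := Real.add_one_le_exp (p * (l + l ^ 2))
    nlinarith
  calc ∑ η : Fin n → ZMod 2 with ¬ ((wt η : ℝ) ≤ (p + ε) * n), bscWeight p η
      ≤ ∑ η : Fin n → ZMod 2 with ¬ ((wt η : ℝ) ≤ (p + ε) * n),
          Real.exp (-(l * ((p + ε) * n))) *
            ((p * Real.exp l) ^ wt η * (1 - p) ^ (n - wt η)) := by
        refine Finset.sum_le_sum fun η hη => ?_
        have hη' := (Finset.mem_filter.1 hη).2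
        push Not at hη'
        have e : Real.exp (-(l * ((p + ε) * n))) *
            ((p * Real.exp l) ^ wt η * (1 - p) ^ (n - wt η))
            = Real.exp (l * (wt η - (p + ε) * n)) * bscWeight p η := by
          unfold bscWeight
          rw [mul_pow, ← Real.exp_nat_mul,
            show l * ((wt η : ℝ) - (p + ε) * n) = -(l * ((p + ε) * n)) + wt η * l by ring,
            Real.exp_add]
          ring
        rw [e]
        have : 1 ≤ Real.exp (l * (wt η - (p + ε) * n)) :=
          Real.one_le_exp (mul_nonneg (by linarith) (by linarith))
        exact le_mul_of_one_le_left (bscWeight_nonneg h0 h1 η) this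
    _ ≤ ∑ η : Fin n → ZMod 2,
          Real.exp (-(l * ((p + ε) * n))) *
            ((p * Real.exp l) ^ wt η * (1 - p) ^ (n - wt η)) :=
        Finset.sum_le_sum_of_subset_of_nonneg (Finset.filter_subset _ _)
          fun η _ _ => by positivity
    _ = Real.exp (-(l * ((p + ε) * n))) * (p * Real.exp l + (1 - p)) ^ n := by
        rw [← Finset.mul_sum, sum_pow_wt]
    _ ≤ Real.exp (-(l * ((p + ε) * n))) * Real.exp (p * (l + l ^ 2)) ^ n := by
        gcongr
    _ = Real.exp ((p * l ^ 2 - l * ε) * n) := by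
        rw [← Real.exp_nat_mul, ← Real.exp_add]
        congr 1
        ring
    _ ≤ _ := by
        refine Real.exp_le_exp.2 (mul_le_mul_of_nonneg_right ?_ (Nat.cast_nonneg n))
        rw [hl]
        nlinarith [mul_pos e0 e0]

/-! ### Hamming spheres and balls -/

/-- Size of the Hamming sphere of radius `t`. -/
def sphereCard (n t : ℕ) : ℕ := (Finset.univ.filter fun η : Fin n → ZMod 2 => wt η = t).card

/-- Size of the Hamming ball of radius `t`. -/
def ballCard (n t : ℕ) : ℕ := (Finset.univ.filter fun η : Fin n → ZMod 2 => wt η ≤ t).card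

/-- Every point of the ball of radius `t` has probability at least `p^t (1-p)^(n-t)`, as `p < 1/2`. -/
lemma ball_mul_le (n t : ℕ) (ht : t ≤ n) {p : ℝ} (h0 : 0 < p) (h1 : p < 1 / 2) :
    (ballCard n t : ℝ) * (p ^ t * (1 - p) ^ (n - t)) ≤ 1 := by
  have q0 : 0 < 1 - p := by linarith
  calc (ballCard n t : ℝ) * (p ^ t * (1 - p) ^ (n - t))
      = ∑ η : Fin n → ZMod 2 with wt η ≤ t, (p ^ t * (1 - p) ^ (n - t)) := by
        simp [ballCard]
    _ ≤ ∑ η : Fin n → ZMod 2 with wt η ≤ t, bscWeight p η := by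
        refine Finset.sum_le_sum fun η hη => ?_
        have h := (Finset.mem_filter.1 hη).2
        unfold bscWeight
        obtain ⟨d, rfl⟩ := Nat.exists_eq_add_of_le h
        rw [show n - wt η = (n - (wt η + d)) + d by omega, pow_add, pow_add]
        have : p ^ d ≤ (1 - p) ^ d := pow_le_pow_left₀ h0.le (by linarith) d
        calc p ^ wt η * p ^ d * (1 - p) ^ (n - (wt η + d))
            = p ^ wt η * (1 - p) ^ (n - (wt η + d)) * p ^ d := by ring
          _ ≤ p ^ wt η * (1 - p) ^ (n - (wt η + d)) * (1 - p) ^ d := by gcongr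
          _ = _ := by ring
    _ ≤ ∑ η : Fin n → ZMod 2, bscWeight p η :=
        Finset.sum_le_sum_of_subset_of_nonneg (Finset.filter_subset _ _)
          fun η _ _ => bscWeight_nonneg h0 (by linarith) η
    _ = 1 := sum_bscWeight n p

lemma ball_le (n t : ℕ) (ht : t ≤ n) {p ε : ℝ} (h0 : 0 < p) (h1 : p < 1 / 2)
    (hte : (t : ℝ) ≤ (p + ε) * n) :
    (ballCard n t : ℝ) ≤
      Real.exp (n * (binH p * Real.log 2 + ε * (Real.log (1 - p) - Real.log p))) := by
  have q0 : 0 < 1 - p := by linarith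
  have hl2 : Real.log 2 ≠ 0 := (Real.log_pos (by norm_num)).ne'
  have hH : binH p * Real.log 2 = -p * Real.log p - (1 - p) * Real.log (1 - p) := by
    unfold binH Real.logb
    field_simp
  have hL : Real.log p ≤ Real.log (1 - p) := Real.log_le_log h0 (by linarith)
  have hpow : p ^ t * (1 - p) ^ (n - t)
      = Real.exp (t * Real.log p + (n - t) * Real.log (1 - p)) := by
    rw [Real.exp_add, ← Nat.cast_sub ht, Real.exp_nat_mul, Real.exp_nat_mul,
      Real.exp_log h0, Real.exp_log q0]
  have := ball_mul_le n t ht h0 h1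
  rw [hpow, ← le_div_iff₀ (Real.exp_pos _), one_div, ← Real.exp_neg] at this
  refine this.trans (Real.exp_le_exp.2 ?_)
  rw [hH]
  nlinarith [mul_le_mul_of_nonneg_right hte (sub_nonneg.2 hL)]

/-! ### Random linear codes -/

/-- The word `aG`, continued by zeros beyond its `N` bits; `G j` is the `j`-th column. -/
def linEnc {k N : ℕ} (G : Fin N → Fin k → ZMod 2) (a : Fin k → ZMod 2) (j : ℕ) : ZMod 2 :=
  if h : j < N then ∑ i, a i * G ⟨j, h⟩ i else 0

lemma linEnc_sub {k N : ℕ} (G : Fin N → Fin k → ZMod 2) (a b : Fin k → ZMod 2) (j : ℕ) :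
    linEnc G (a - b) j = linEnc G a j - linEnc G b j := by
  unfold linEnc
  split_ifs
  · simp [sub_mul]
  · simp

/-- The first `n` bits of the word `aG`. -/
def codeword {k N : ℕ} (G : Fin N → Fin k → ZMod 2) (a : Fin k → ZMod 2) (n : ℕ) :
    Fin n → ZMod 2 := fun j => linEnc G a j

/-- For `a ≠ 0` and uniformly random `G`, the truncated word `aG` is uniformly distributed. -/
lemma sum_codeword {k N n : ℕ} (hn : n ≤ N) (a : Fin k → ZMod 2) (ha : a ≠ 0)
    (F : (Fin n → ZMod 2) → ℝ) :
    (2 : ℝ) ^ n * ∑ G : Fin N → Fin k → ZMod 2, F (codeword G a n)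
      = Fintype.card (Fin N → Fin k → ZMod 2) * ∑ u, F u := by
  obtain ⟨i₀, hi⟩ := Function.ne_iff.1 ha
  have hi1 : a i₀ = 1 := by
    have : ∀ b : ZMod 2, b ≠ 0 → b = 1 := by decide
    exact this _ hi
  -- Adding `u` to the row `i₀` of `G`, where `a i₀ = 1`, translates the codeword by `u`.
  let S : (Fin n → ZMod 2) → (Fin N → Fin k → ZMod 2) := fun u j i =>
    if i = i₀ then (if h : (j : ℕ) < n then u ⟨j, h⟩ else 0) else 0
  have hS : ∀ u G, codeword (G + S u) a n = codeword G a n + u := by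
    intro u G
    ext j
    have hj : (j : ℕ) < N := lt_of_lt_of_le j.2 hn
    simp [codeword, linEnc, hj, S, mul_add, Finset.sum_add_distrib, hi1]
  have h1 : ∀ u, ∑ G : Fin N → Fin k → ZMod 2, F (codeword G a n)
      = ∑ G : Fin N → Fin k → ZMod 2, F (codeword G a n + u) := by
    intro u
    rw [← Equiv.sum_comp (Equiv.addRight (S u))]
    simp [hS]
  have hcard : (Fintype.card (Fin n → ZMod 2) : ℝ) = 2 ^ n := by simp [ZMod.card]
  calc (2 : ℝ) ^ n * ∑ G : Fin N → Fin k → ZMod 2, F (codeword G a n)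
      = ∑ u : Fin n → ZMod 2, ∑ G : Fin N → Fin k → ZMod 2, F (codeword G a n) := by
        rw [Finset.sum_const, nsmul_eq_mul, Finset.card_univ, hcard]
    _ = ∑ u : Fin n → ZMod 2, ∑ G : Fin N → Fin k → ZMod 2, F (codeword G a n + u) :=
        Finset.sum_congr rfl fun u _ => h1 u
    _ = ∑ G : Fin N → Fin k → ZMod 2, ∑ u : Fin n → ZMod 2, F (codeword G a n + u) :=
        Finset.sum_comm
    _ = ∑ G : Fin N → Fin k → ZMod 2, ∑ u : Fin n → ZMod 2, F u :=
        Finset.sum_congr rfl fun G _ => Equiv.sum_comp (Equiv.addLeft (codeword G a n)) F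
    _ = _ := by rw [Finset.sum_const, nsmul_eq_mul, Finset.card_univ]

/-- The number of nonzero messages whose codeword is at least as close to `η` as the zero word. -/
noncomputable def badCount {k N n : ℕ} (G : Fin N → Fin k → ZMod 2) (η : Fin n → ZMod 2) : ℝ :=
  ∑ a : Fin k → ZMod 2 with a ≠ 0, if wt (codeword G a n + η) ≤ wt η then (1 : ℝ) else 0

/-- The number of pairs `(η, a)` with `wt η = t`, `a ≠ 0` and `wt (aG + η) ≤ t`. -/
noncomputable def badPairs {k N : ℕ} (G : Fin N → Fin k → ZMod 2) (n t : ℕ) : ℝ :=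
  ∑ η : Fin n → ZMod 2 with wt η = t, badCount G η

lemma badCount_nonneg {k N n : ℕ} (G : Fin N → Fin k → ZMod 2) (η : Fin n → ZMod 2) :
    0 ≤ badCount G η :=
  Finset.sum_nonneg fun a _ => by split_ifs <;> norm_num

lemma one_le_badCount {k N n : ℕ} (G : Fin N → Fin k → ZMod 2) (η : Fin n → ZMod 2)
    (h : ∃ a : Fin k → ZMod 2, a ≠ 0 ∧ wt (codeword G a n + η) ≤ wt η) :
    1 ≤ badCount G η := by
  obtain ⟨a, ha, hw⟩ := h
  have := Finset.single_le_sum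
    (f := fun a => if wt (codeword G a n + η) ≤ wt η then (1 : ℝ) else 0)
    (s := Finset.univ.filter fun a : Fin k → ZMod 2 => a ≠ 0)
    (fun a _ => by positivity) (Finset.mem_filter.2 ⟨Finset.mem_univ a, ha⟩)
  simp only [if_pos hw] at this
  exact this

lemma sum_badPairs_le {k N n : ℕ} (hn : n ≤ N) (t : ℕ) :
    ∑ G : Fin N → Fin k → ZMod 2, badPairs G n t
      ≤ Fintype.card (Fin N → Fin k → ZMod 2) *
        ((2 : ℝ) ^ k / 2 ^ n * (sphereCard n t * ballCard n t)) := by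
  set C : ℝ := (Fintype.card (Fin N → Fin k → ZMod 2) : ℝ) with hC
  have hone : ∀ (η : Fin n → ZMod 2), wt η = t → ∀ a : Fin k → ZMod 2, a ≠ 0 →
      ∑ G : Fin N → Fin k → ZMod 2, (if wt (codeword G a n + η) ≤ wt η then (1 : ℝ) else 0)
        = C * ballCard n t / 2 ^ n := by
    intro η hη a ha
    have h := sum_codeword hn a ha (fun u => if wt (u + η) ≤ wt η then (1 : ℝ) else 0)
    have h2 : ∑ u : Fin n → ZMod 2, (if wt (u + η) ≤ wt η then (1 : ℝ) else 0)
        = ballCard n t := by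
      refine (Equiv.sum_comp (Equiv.addRight η)
        (fun u => if wt u ≤ wt η then (1 : ℝ) else 0)).trans ?_
      rw [hη]
      simp [ballCard]
    rw [h2] at h
    rw [eq_div_iff (by positivity), mul_comm]
    exact h
  have hcard : (Fintype.card (Fin k → ZMod 2) : ℝ) = 2 ^ k := by simp [ZMod.card]
  calc ∑ G : Fin N → Fin k → ZMod 2, badPairs G n t
      = ∑ η : Fin n → ZMod 2 with wt η = t, ∑ a : Fin k → ZMod 2 with a ≠ 0,
          ∑ G : Fin N → Fin k → ZMod 2,
            (if wt (codeword G a n + η) ≤ wt η then (1 : ℝ) else 0) := by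
        unfold badPairs badCount
        rw [Finset.sum_comm]
        exact Finset.sum_congr rfl fun η _ => Finset.sum_comm
    _ = ∑ η : Fin n → ZMod 2 with wt η = t, ∑ a : Fin k → ZMod 2 with a ≠ 0,
          C * ballCard n t / 2 ^ n :=
        Finset.sum_congr rfl fun η hη => Finset.sum_congr rfl fun a ha =>
          hone η (Finset.mem_filter.1 hη).2 a (Finset.mem_filter.1 ha).2
    _ ≤ ∑ η : Fin n → ZMod 2 with wt η = t, 2 ^ k * (C * ballCard n t / 2 ^ n) := by
        refine Finset.sum_le_sum fun η _ => ?_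
        rw [Finset.sum_const, nsmul_eq_mul]
        refine mul_le_mul_of_nonneg_right ?_ (by positivity)
        rw [← hcard]
        exact_mod_cast Finset.card_le_univ _
    _ = _ := by
        rw [Finset.sum_const, nsmul_eq_mul, ← sphereCard]
        ring

/-- If every `X · i` has mean at most `w i`, then some `g` exceeds no mean by more than the number of
indices. -/
lemma exists_le_card_mul {ι Γ : Type*} [Fintype ι] [Fintype Γ] [Nonempty Γ]
    (X : Γ → ι → ℝ) (w : ι → ℝ) (hX : ∀ g i, 0 ≤ X g i) (hw : ∀ i, 0 ≤ w i)
    (h : ∀ i, ∑ g, X g i ≤ Fintype.card Γ * w i) :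
    ∃ g, ∀ i, X g i ≤ Fintype.card ι * w i := by
  obtain ⟨g, -, hg⟩ := Finset.exists_le_of_sum_le (s := (Finset.univ : Finset Γ))
    (f := fun g => ∑ i, X g i / w i) (g := fun _ => (Fintype.card ι : ℝ))
    Finset.univ_nonempty (by
      rw [Finset.sum_comm, Finset.sum_const, nsmul_eq_mul, Finset.card_univ]
      calc ∑ i, ∑ g, X g i / w i ≤ ∑ i : ι, (Fintype.card Γ : ℝ) := by
            refine Finset.sum_le_sum fun i _ => ?_
            rw [← Finset.sum_div]
            exact div_le_of_le_mul₀ (hw i) (by positivity) (h i)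
        _ = _ := by simp [mul_comm])
  refine ⟨g, fun i => ?_⟩
  rcases (hw i).eq_or_lt with h0 | h0
  -- When the mean vanishes the quotient is junk, but then `X g i = 0`.
  · have h1 := h i
    have h2 := Finset.single_le_sum (f := fun g => X g i) (fun g _ => hX g i) (Finset.mem_univ g)
    rw [← h0] at h1 ⊢
    linarith
  · rw [← div_le_iff₀ h0]
    exact (Finset.single_le_sum (f := fun i => X g i / w i)
      (fun i _ => div_nonneg (hX g i) (hw i)) (Finset.mem_univ i)).trans hg

lemma exists_good_code (k N : ℕ) : ∃ G : Fin N → Fin k → ZMod 2, ∀ n ≤ N, ∀ t ≤ N,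
    badPairs G n t ≤ ((N : ℝ) + 1) ^ 2 *
      ((2 : ℝ) ^ k / 2 ^ n * (sphereCard n t * ballCard n t)) := by
  obtain ⟨G, hG⟩ := exists_le_card_mul (ι := Fin (N + 1) × Fin (N + 1))
    (fun (G : Fin N → Fin k → ZMod 2) i => badPairs G i.1 i.2)
    (fun i => (2 : ℝ) ^ k / 2 ^ (i.1 : ℕ) * (sphereCard i.1 i.2 * ballCard i.1 i.2))
    (fun G i => Finset.sum_nonneg fun η _ => badCount_nonneg G η)
    (fun i => by positivity)
    (fun i => sum_badPairs_le (Nat.lt_succ_iff.1 i.1.2) _)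
  refine ⟨G, fun n hn t ht => ?_⟩
  have := hG (⟨n, by omega⟩, ⟨t, by omega⟩)
  simpa [pow_two] using this

/-! ### Error probability of a good code -/

lemma error_le {k N n : ℕ} (G : Fin N → Fin k → ZMod 2) {M p ε B : ℝ} (hM : 0 ≤ M)
    (hG : ∀ t ≤ n, badPairs G n t ≤ M * (sphereCard n t * ballCard n t))
    (h0 : 0 < p) (h1 : p < 1 / 2) (e0 : 0 < ε) (e1 : ε ≤ 1)
    (hB0 : 0 ≤ B) (hB : ∀ t ≤ n, (t : ℝ) ≤ (p + ε) * n → (ballCard n t : ℝ) ≤ B) :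
    ∑ η : Fin n → ZMod 2 with
        (∃ a : Fin k → ZMod 2, a ≠ 0 ∧ wt (codeword G a n + η) ≤ wt η), bscWeight p η
      ≤ M * B + Real.exp (-(ε ^ 2 / 4) * n) := by
  have q0 : 0 < 1 - p := by linarith
  have p1 : p < 1 := by linarith
  have hlow : ∑ η : Fin n → ZMod 2 with (wt η : ℝ) ≤ (p + ε) * n, bscWeight p η * badCount G η
      ≤ M * B := by
    calc ∑ η : Fin n → ZMod 2 with (wt η : ℝ) ≤ (p + ε) * n, bscWeight p η * badCount G η
        = ∑ t ∈ Finset.range (n + 1), ∑ η : Fin n → ZMod 2 with wt η = t,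
            (if (wt η : ℝ) ≤ (p + ε) * n then bscWeight p η * badCount G η else 0) := by
          rw [Finset.sum_filter, Finset.sum_fiberwise_of_maps_to]
          intro η _
          exact Finset.mem_range.2 (Nat.lt_succ_of_le (wt_le η))
      _ ≤ ∑ t ∈ Finset.range (n + 1), ∑ η : Fin n → ZMod 2 with wt η = t,
            bscWeight p η * (M * B) := by
          refine Finset.sum_le_sum fun t ht => ?_
          have htn : t ≤ n := Nat.lt_succ_iff.1 (Finset.mem_range.1 ht)
          by_cases hc : (t : ℝ) ≤ (p + ε) * n
          · have e1 : ∑ η : Fin n → ZMod 2 with wt η = t,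
                (if (wt η : ℝ) ≤ (p + ε) * n then bscWeight p η * badCount G η else 0)
                = (p ^ t * (1 - p) ^ (n - t)) * badPairs G n t := by
              unfold badPairs
              rw [Finset.mul_sum]
              refine Finset.sum_congr rfl fun η hη => ?_
              have h := (Finset.mem_filter.1 hη).2
              rw [h, if_pos hc, bscWeight, h]
            have e2 : ∑ η : Fin n → ZMod 2 with wt η = t, bscWeight p η * (M * B)
                = (p ^ t * (1 - p) ^ (n - t)) * (M * (sphereCard n t * B)) := by
              rw [Finset.sum_congr rfl (g := fun _ => (p ^ t * (1 - p) ^ (n - t)) * (M * B))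
                (fun η hη => by rw [bscWeight, (Finset.mem_filter.1 hη).2])]
              rw [Finset.sum_const, nsmul_eq_mul, ← sphereCard]
              ring
            rw [e1, e2]
            refine mul_le_mul_of_nonneg_left ((hG t htn).trans ?_) (by positivity)
            have := hB t htn hc
            gcongr
          · refine Finset.sum_le_sum fun η hη => ?_
            rw [(Finset.mem_filter.1 hη).2, if_neg hc]
            exact mul_nonneg (bscWeight_nonneg h0 p1 η) (by positivity)
      _ = ∑ η : Fin n → ZMod 2, bscWeight p η * (M * B) := by
          rw [Finset.sum_fiberwise_of_maps_to]
          intro η _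
          exact Finset.mem_range.2 (Nat.lt_succ_of_le (wt_le η))
      _ = M * B := by rw [← Finset.sum_mul, sum_bscWeight, one_mul]
  have htail := tail_le n h0 p1 e0 e1
  refine le_trans ?_ (add_le_add hlow htail)
  rw [Finset.sum_filter, Finset.sum_filter, Finset.sum_filter, ← Finset.sum_add_distrib]
  refine Finset.sum_le_sum fun η _ => ?_
  have hb := bscWeight_nonneg h0 p1 η
  have hc := badCount_nonneg G η
  by_cases hl : (wt η : ℝ) ≤ (p + ε) * n
  · rw [if_pos hl, if_neg (not_not.2 hl), add_zero]
    split_ifs with h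
    · exact le_mul_of_one_le_right hb (one_le_badCount G η h)
    · positivity
  · rw [if_neg hl, if_pos hl, zero_add]
    split_ifs
    · exact le_rfl
    · exact hb

/-! ### Minimum-distance decoding -/

lemma exists_nearest {k N n : ℕ} (G : Fin N → Fin k → ZMod 2) (y : Fin n → ZMod 2) :
    ∃ a : Fin k → ZMod 2, ∀ b, wt (y - codeword G a n) ≤ wt (y - codeword G b n) := by
  obtain ⟨a, -, ha⟩ := Finset.exists_min_image (Finset.univ : Finset (Fin k → ZMod 2))
    (fun a => wt (y - codeword G a n)) Finset.univ_nonempty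
  exact ⟨a, fun b => ha b (Finset.mem_univ b)⟩

/-- Minimum-distance decoding, with ties broken arbitrarily. -/
noncomputable def nearest {k N n : ℕ} (G : Fin N → Fin k → ZMod 2) (y : Fin n → ZMod 2) :
    Fin k → ZMod 2 := (exists_nearest G y).choose

lemma nearest_error {k N n : ℕ} (G : Fin N → Fin k → ZMod 2) (m : Fin k → ZMod 2)
    (η : Fin n → ZMod 2) (h : nearest G (codeword G m n + η) ≠ m) :
    ∃ a : Fin k → ZMod 2, a ≠ 0 ∧ wt (codeword G a n + η) ≤ wt η := by
  refine ⟨m - nearest G (codeword G m n + η), sub_ne_zero.2 h.symm, ?_⟩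
  have := (exists_nearest G (codeword G m n + η)).choose_spec m
  rw [add_sub_cancel_left] at this
  refine le_trans (le_of_eq ?_) this
  congr 1
  ext j
  simp only [codeword, linEnc_sub, Pi.add_apply, Pi.sub_apply, nearest]
  ring

/-- The rateless decoder: minimum-distance decoding of the first `min n N` received bits. -/
noncomputable def rlDec {k N : ℕ} (G : Fin N → Fin k → ZMod 2) (n : ℕ) (y : Fin n → ZMod 2) :
    Fin k → ZMod 2 :=
  nearest G (n := min n N) fun j => y (Fin.castLE (min_le_left n N) j)

lemma rlDec_error_le {k N : ℕ} (G : Fin N → Fin k → ZMod 2) (n : ℕ) (m : Fin k → ZMod 2)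
    {p : ℝ} (h0 : 0 < p) (h1 : p < 1) :
    bscProb p (Finset.univ.filter fun η : Fin n → ZMod 2 =>
        rlDec G n ((fun j : Fin n => linEnc G m (j : ℕ)) + η) ≠ m) ≤
      ∑ η : Fin (min n N) → ZMod 2 with
        (∃ a : Fin k → ZMod 2, a ≠ 0 ∧ wt (codeword G a (min n N) + η) ≤ wt η),
          bscWeight p η := by
  have key : ∀ (l r : ℕ) (hl : l ≤ n), n = l + r →
      bscProb p (Finset.univ.filter fun η : Fin n → ZMod 2 =>
        nearest G (n := l)
          (fun j => ((fun j : Fin n => linEnc G m (j : ℕ)) + η) (Fin.castLE hl j)) ≠ m)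
      ≤ ∑ η : Fin l → ZMod 2 with
        (∃ a : Fin k → ZMod 2, a ≠ 0 ∧ wt (codeword G a l + η) ≤ wt η), bscWeight p η := by
    intro l r hl hn
    subst hn
    have := bscProb_truncate l r p (fun η : Fin l → ZMod 2 => nearest G (codeword G m l + η) ≠ m)
    refine le_trans (le_of_eq ?_) (le_trans (le_of_eq this) ?_)
    · rfl
    · refine Finset.sum_le_sum_of_subset_of_nonneg (fun η hη => ?_)
        (fun η _ _ => bscWeight_nonneg h0 h1 η)
      exact Finset.mem_filter.2 ⟨Finset.mem_univ _,
        nearest_error G m η (Finset.mem_filter.1 hη).2⟩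
  exact key (min n N) (n - min n N) (min_le_left _ _) (by omega)

/-! ### Asymptotics -/

lemma poly_mul_exp_le (a : ℝ) (ha : 0 < a) : ∀ᶠ k : ℕ in Filter.atTop,
    ((((k ^ 2 : ℕ) : ℝ) + 1) ^ 2 + 1) * Real.exp (-a * k) ≤ Real.exp (-(a / 2) * k) := by
  have ht : Filter.Tendsto (fun x : ℝ => ((x ^ 2 + 1) ^ 2 + 1) * Real.exp (-(a / 2) * x))
      Filter.atTop (nhds 0) := by
    have h : ∀ n : ℕ, Filter.Tendsto (fun x : ℝ => x ^ n * Real.exp (-(a / 2) * x))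
        Filter.atTop (nhds 0) := fun n => by
      simpa only [Real.rpow_natCast] using
        tendsto_rpow_mul_exp_neg_mul_atTop_nhds_zero (n : ℝ) (a / 2) (by positivity)
    have := ((h 4).add ((h 2).const_mul 2)).add ((h 0).const_mul 2)
    simp only [mul_zero, add_zero] at this
    refine this.congr fun x => ?_
    ring
  have h2 := (ht.comp tendsto_natCast_atTop_atTop).eventually_le_const one_pos
  filter_upwards [h2] with k hk
  simp only [Function.comp_apply] at hk
  have : Real.exp (-a * k) = Real.exp (-(a / 2) * k) * Real.exp (-(a / 2) * k) := by
    rw [← Real.exp_add]; congr 1; ring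
  rw [this, ← mul_assoc]
  refine mul_le_of_le_one_left (Real.exp_pos _).le ?_
  push_cast
  exact hk

lemma binH_nonneg {p : ℝ} (h0 : 0 < p) (h1 : p < 1) : 0 ≤ binH p := by
  have a := Real.logb_nonpos (b := 2) (by norm_num) h0.le h1.le
  have b := Real.logb_nonpos (b := 2) (x := 1 - p) (by norm_num) (by linarith) (by linarith)
  unfold binH
  nlinarith

theorem stmt18 (β : ℕ → ℝ) (hβ1 : ∀ k, 1 ≤ β k)
    (hβ : Filter.Tendsto β Filter.atTop Filter.atTop) :
    ∃ E : (k : ℕ) → (Fin k → ZMod 2) → (ℕ → ZMod 2),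
    ∃ D : (k n : ℕ) → (Fin n → ZMod 2) → (Fin k → ZMod 2),
      ∀ p δ : ℝ, 0 < p → p < 1 / 2 → 0 < δ → δ < 1 - binH p →
        ∃ c : ℝ, 0 < c ∧ ∃ k₀ : ℕ, ∀ k : ℕ, k₀ ≤ k →
          ∀ n : ℕ, (k : ℝ) / (1 - binH p - δ) ≤ (n : ℝ) →
            ∀ m : Fin k → ZMod 2,
              bscProb p (Finset.univ.filter fun η : Fin n → ZMod 2 =>
                  D k n ((fun j : Fin n => E k m (j : ℕ)) + η) ≠ m) ≤
                (2 : ℝ) ^ (-c * (k : ℝ) / β k) := by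
  choose G hG using fun k : ℕ => exists_good_code k (k ^ 2)
  refine ⟨fun k m => linEnc (G k) m, fun k n y => rlDec (G k) n y, ?_⟩
  intro p δ h0 h1 hδ hδ2
  have p1 : p < 1 := by linarith
  have hR : 0 < 1 - binH p - δ := by linarith
  have hl2 : 0 < Real.log 2 := Real.log_pos (by norm_num)
  set L := Real.log (1 - p) - Real.log p with hLdef
  have hL : 0 < L := sub_pos.2 (Real.log_lt_log h0 (by linarith))
  -- With this `ε` the ball of radius `(p+ε)n` has size at most `2^(n(H(p)+δ/2))`.
  set ε : ℝ := min 1 (δ * Real.log 2 / (2 * L)) with hε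
  have e0 : 0 < ε := lt_min one_pos (by positivity)
  have e1 : ε ≤ 1 := min_le_left _ _
  have eL : ε * L ≤ δ * Real.log 2 / 2 := by
    have : ε ≤ δ * Real.log 2 / (2 * L) := min_le_right _ _
    calc ε * L ≤ δ * Real.log 2 / (2 * L) * L := by gcongr
      _ = _ := by field_simp
  set a : ℝ := min (δ * Real.log 2 / 2) (ε ^ 2 / 4) with ha
  have a0 : 0 < a := lt_min (by positivity) (by positivity)
  obtain ⟨k₁, hk₁⟩ := Filter.eventually_atTop.1 (poly_mul_exp_le a a0)
  obtain ⟨k₂, hk₂⟩ := exists_nat_ge (1 / (1 - binH p - δ))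
  refine ⟨a / 2 / Real.log 2, by positivity, max k₁ k₂, ?_⟩
  intro k hk n hn m
  have hkk1 := hk₁ k ((le_max_left _ _).trans hk)
  have hkk2 : 1 / (1 - binH p - δ) ≤ (k : ℝ) :=
    hk₂.trans (by exact_mod_cast (le_max_right _ _).trans hk)
  refine (rlDec_error_le (G k) n m h0 p1).trans ?_
  set l := min n (k ^ 2) with hl
  have hlk : (k : ℝ) ≤ l * (1 - binH p - δ) := by
    rw [← div_le_iff₀ hR, hl, Nat.cast_min]
    refine le_min hn ?_
    push_cast
    calc (k : ℝ) / (1 - binH p - δ) = k * (1 / (1 - binH p - δ)) := by ring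
      _ ≤ k * k := by gcongr
      _ = _ := by ring
  have hl0 : (0 : ℝ) ≤ l := Nat.cast_nonneg l
  have hkl : (k : ℝ) ≤ l := by
    have := binH_nonneg h0 p1
    nlinarith
  have herr := error_le (n := l) (G k) (M := (((k ^ 2 : ℕ) : ℝ) + 1) ^ 2 * ((2 : ℝ) ^ k / 2 ^ l))
    (p := p) (ε := ε) (B := Real.exp (l * (binH p * Real.log 2 + ε * L))) (by positivity)
    (fun t ht => by
      rw [mul_assoc]
      exact hG k l (min_le_right _ _) t (ht.trans (min_le_right _ _)))
    h0 h1 e0 e1 (Real.exp_pos _).le (fun t ht hte => ball_le l t ht h0 h1 hte)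
  refine herr.trans ?_
  have hb1 : (2 : ℝ) ^ k / 2 ^ l * Real.exp (l * (binH p * Real.log 2 + ε * L))
      ≤ Real.exp (-a * k) := by
    have h2 : ∀ i : ℕ, (2 : ℝ) ^ i = Real.exp (i * Real.log 2) := fun i => by
      rw [Real.exp_nat_mul, Real.exp_log (by norm_num)]
    rw [h2, h2, ← Real.exp_sub, ← Real.exp_add]
    refine Real.exp_le_exp.2 ?_
    have t1 := mul_le_mul_of_nonneg_right hlk hl2.le
    have t2 := mul_le_mul_of_nonneg_left eL hl0
    have t3 : a * k ≤ δ * Real.log 2 / 2 * l :=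
      mul_le_mul (min_le_left _ _) hkl (Nat.cast_nonneg k) (by positivity)
    nlinarith
  have hb2 : Real.exp (-(ε ^ 2 / 4) * l) ≤ Real.exp (-a * k) := by
    refine Real.exp_le_exp.2 ?_
    have t3 : a * k ≤ ε ^ 2 / 4 * l :=
      mul_le_mul (min_le_right _ _) hkl (Nat.cast_nonneg k) (by positivity)
    linarith
  calc (((k ^ 2 : ℕ) : ℝ) + 1) ^ 2 * ((2 : ℝ) ^ k / 2 ^ l) *
        Real.exp (l * (binH p * Real.log 2 + ε * L)) + Real.exp (-(ε ^ 2 / 4) * l)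
      ≤ (((k ^ 2 : ℕ) : ℝ) + 1) ^ 2 * Real.exp (-a * k) + Real.exp (-a * k) := by
        rw [mul_assoc]
        gcongr
    _ = ((((k ^ 2 : ℕ) : ℝ) + 1) ^ 2 + 1) * Real.exp (-a * k) := by ring
    _ ≤ Real.exp (-(a / 2) * k) := hkk1
    _ = (2 : ℝ) ^ (-(a / 2 / Real.log 2) * (k : ℝ)) := by
        rw [Real.rpow_def_of_pos (by norm_num)]
        congr 1
        field_simp
    _ ≤ (2 : ℝ) ^ (-(a / 2 / Real.log 2) * (k : ℝ) / β k) := by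
        refine Real.rpow_le_rpow_of_exponent_le (by norm_num) ?_
        have hc : 0 ≤ a / 2 / Real.log 2 * (k : ℝ) := by positivity
        have := div_le_self hc (hβ1 k)
        rw [neg_mul, neg_div]
        linarith
end
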